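/- arXiv:2509.17515 — 3 statements merged into one kernel-verified Lean document; each statement's English description precedes it below -/
import Mathlib

section
/- Let n ≥ 1, let K be a real n×n matrix, and let I ⊆ {1,…,n} be a subset with m = |I| elements. In the exterior algebra Λ(ℝ^{2n}) with ψ_i = ι(e_i), ψ̄_i = ι(e_{n+i}) and Q = Σ_{i,j} K_{ij} ψ̄_i ∧ ψ_j, one has Q^{n−m} ∧ (∧_{i∈I} (ψ̄_i ∧ ψ_i)) = (n−m)! · det(K_{Iᶜ}) · Ω, where K_{Iᶜ} is the principal submatrix of K with rows and columns indexed by the complement of I, and Ω = ψ̄_1 ∧ ψ_1 ∧ ⋯ ∧ ψ̄_n ∧ ψ_n. -/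
open ExteriorAlgebra

namespace GrassmannAux

/-- Square-zero binomial expansion. -/
lemma add_pow_sq_zero {A : Type*} [CommRing A] (q x : A) (hq : q * q = 0) (k : ℕ) :
    (q + x) ^ (k + 1) = x ^ (k + 1) + ((k + 1 : ℕ) : A) * (q * x ^ k) := by
  induction k with
  | zero => simp; ring
  | succ k ih =>
    rw [pow_succ, ih]
    push_cast
    linear_combination ((k : A) + 1) * x ^ k * hq

lemma sum_pow_card {A ι : Type*} [CommRing A] [DecidableEq ι] (q : ι → A)
    (hq : ∀ i, q i * q i = 0) (s : Finset ι) :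
    (∑ i ∈ s, q i) ^ s.card = (s.card.factorial : A) * ∏ i ∈ s, q i ∧
      (∑ i ∈ s, q i) ^ (s.card + 1) = 0 := by
  induction s using Finset.induction_on with
  | empty => simp
  | insert a s ha ih =>
    obtain ⟨h1, h2⟩ := ih
    rw [Finset.sum_insert ha, Finset.card_insert_of_notMem ha, Finset.prod_insert ha,
      add_pow_sq_zero _ _ (hq a), add_pow_sq_zero _ _ (hq a), pow_succ _ (s.card + 1), h2, h1,
      Nat.factorial_succ]
    constructor
    · push_cast; ring
    · simp

lemma pow_mul_of_mul_eq_zero {A : Type*} [CommRing A] (x y P : A) (h : y * P = 0) (k : ℕ) :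
    (y + x) ^ k * P = x ^ k * P := by
  induction k with
  | zero => simp
  | succ k ih =>
    rw [pow_succ, pow_succ]
    linear_combination x * ih + (y + x) ^ k * h

lemma comm_main {A ι : Type*} [CommRing A] [Fintype ι] [DecidableEq ι] (q p : ι → A)
    (hq : ∀ i, q i * q i = 0) (hqp : ∀ i, q i * p i = 0) (I : Finset ι) :
    (∑ i, q i) ^ (Fintype.card ι - I.card) * ∏ i ∈ I, p i =
      ((Fintype.card ι - I.card).factorial : A) * ∏ i, (if i ∈ I then p i else q i) := by
  have h0 : (∑ i ∈ I, q i) * ∏ i ∈ I, p i = 0 := by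
    rw [Finset.sum_mul]
    refine Finset.sum_eq_zero fun i hi => ?_
    rw [← Finset.mul_prod_erase _ _ hi, ← mul_assoc, hqp, zero_mul]
  rw [← Finset.sum_add_sum_compl I q, pow_mul_of_mul_eq_zero _ _ _ h0, ← Finset.card_compl,
    (sum_pow_card q hq Iᶜ).1, ← Finset.prod_mul_prod_compl I (fun i => if i ∈ I then p i else q i)]
  have e1 : ∏ i ∈ I, (if i ∈ I then p i else q i) = ∏ i ∈ I, p i :=
    Finset.prod_congr rfl fun i hi => by simp [hi]
  have e2 : ∏ i ∈ Iᶜ, (if i ∈ I then p i else q i) = ∏ i ∈ Iᶜ, q i :=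
    Finset.prod_congr rfl fun i hi => by simp [Finset.mem_compl.1 hi]
  rw [e1, e2]; ring

lemma alternating_det {A : Type*} [AddCommGroup A] [Module ℝ A] {n : ℕ}
    (f : (Fin n → ℝ) [⋀^Fin n]→ₗ[ℝ] A) (M : Matrix (Fin n) (Fin n) ℝ) :
    f (fun i => M i) = M.det • f (fun i => Pi.single i 1) := by
  have : f = (LinearMap.toSpanSingleton ℝ A (f (fun i => Pi.single i 1))).compAlternatingMap
      Matrix.detRowAlternating := by
    refine Module.Basis.ext_alternating (Pi.basisFun ℝ (Fin n)) fun v hv => ?_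
    let σ : Equiv.Perm (Fin n) := Equiv.ofBijective v (Finite.injective_iff_bijective.1 hv)
    have e : (fun i => Pi.basisFun ℝ (Fin n) (v i)) =
      (fun i => (Pi.single i 1 : Fin n → ℝ)) ∘ σ := by
      funext i; simp [σ]
    have e1 : Matrix.detRowAlternating (fun i => (Pi.single i 1 : Fin n → ℝ)) = (1 : ℝ) := by
      have : (fun i => (Pi.single i 1 : Fin n → ℝ)) = (1 : Matrix (Fin n) (Fin n) ℝ) := by
        ext i j; simp [Matrix.one_apply, Pi.single_apply, eq_comm]
      rw [this]; exact Matrix.det_one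
    rw [e, AlternatingMap.map_perm, AlternatingMap.map_perm]
    simp [e1]
  conv_lhs => rw [this]
  rfl

lemma det_aux {n : ℕ} (K : Matrix (Fin n) (Fin n) ℝ) (I : Finset (Fin n)) :
    (Matrix.of fun i => if i ∈ I then (Pi.single i 1 : Fin n → ℝ) else K i).det =
      (K.submatrix (fun x : ↥(Iᶜ) => (x : Fin n)) fun x : ↥(Iᶜ) => (x : Fin n)).det := by
  rw [Matrix.twoBlockTriangular_det' _ (fun i => i ∈ I)]
  · have h1 : Matrix.toSquareBlockProp
      (Matrix.of fun i => if i ∈ I then (Pi.single i 1 : Fin n → ℝ) else K i) (fun i => i ∈ I)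
        = 1 := by
      ext ⟨i, hi⟩ ⟨j, hj⟩
      simp [Matrix.toSquareBlockProp_def, hi, Matrix.one_apply, Pi.single_apply, eq_comm]
    rw [h1, @Matrix.det_one _ _ (_) (_) _, one_mul]
    let e : {i // ¬ i ∈ I} ≃ ↥(Iᶜ) := Equiv.subtypeEquivRight (by simp)
    rw [← Matrix.det_submatrix_equiv_self e]
    congr 1
    ext ⟨i, hi⟩ ⟨j, hj⟩
    simp [Matrix.toSquareBlockProp_def, hi, e]
  · intro i hi j hj
    have : j ≠ i := fun h => hj (h ▸ hi)
    simp [hi, this]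

section Ext
variable {M : Type*} [AddCommGroup M] [Module ℝ M]

lemma swap (a b : M) : ι ℝ a * ι ℝ b = - (ι ℝ b * ι ℝ a) :=
  eq_neg_of_add_eq_zero_left (ι_add_mul_swap a b)

lemma even_comm (a b c d : M) :
    (ι ℝ a * ι ℝ b) * (ι ℝ c * ι ℝ d) = (ι ℝ c * ι ℝ d) * (ι ℝ a * ι ℝ b) := by
  have h1 : ∀ x y z : M, ι ℝ x * ι ℝ y * ι ℝ z = ι ℝ z * (ι ℝ x * ι ℝ y) := by
    intro x y z
    rw [mul_assoc, swap y z, mul_neg, ← mul_assoc, swap x z, neg_mul, neg_neg, mul_assoc]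
  rw [← mul_assoc, h1, mul_assoc, h1, mul_assoc]

variable (M) in
/-- Products of two vectors. -/
def gens : Set (ExteriorAlgebra ℝ M) := {x | ∃ a b : M, x = ι ℝ a * ι ℝ b}

variable (M) in
/-- The commutative subalgebra generated by products of two vectors. -/
abbrev evenAlg : Subalgebra ℝ (ExteriorAlgebra ℝ M) := Algebra.adjoin ℝ (gens M)

noncomputable instance : CommRing (evenAlg M) :=
  Algebra.adjoinCommRingOfComm ℝ (by
    rintro _ ⟨a, b, rfl⟩ _ ⟨c, d, rfl⟩
    exact even_comm a b c d)

/-- Left multiplication by a vector, as a linear map to the even subalgebra. -/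
noncomputable def q (a : M) : M →ₗ[ℝ] evenAlg M where
  toFun b := ⟨ι ℝ a * ι ℝ b, Algebra.subset_adjoin ⟨a, b, rfl⟩⟩
  map_add' x y := Subtype.ext (by simp [mul_add])
  map_smul' r x := Subtype.ext (by simp)

lemma coe_q (a b : M) : ((q a b : evenAlg M) : ExteriorAlgebra ℝ M) = ι ℝ a * ι ℝ b := rfl

lemma q_left (a b c : M) : q a b * q a c = 0 := by
  apply Subtype.ext
  change (ι ℝ a * ι ℝ b) * (ι ℝ a * ι ℝ c) = 0
  rw [swap a b, neg_mul, mul_assoc, ← mul_assoc (ι ℝ a) (ι ℝ a), ι_sq_zero]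
  simp

lemma q_right (a b c : M) : q a c * q b c = 0 := by
  apply Subtype.ext
  change (ι ℝ a * ι ℝ c) * (ι ℝ b * ι ℝ c) = 0
  rw [swap b c, mul_neg, mul_assoc, ← mul_assoc (ι ℝ c) (ι ℝ c), ι_sq_zero]
  simp

/-- The alternating map sending `v` to the product of the `a i ∧ L (v i)`. -/
noncomputable def altProd {n : ℕ} (a : Fin n → M) (L : (Fin n → ℝ) →ₗ[ℝ] M) :
    (Fin n → ℝ) [⋀^Fin n]→ₗ[ℝ] evenAlg M :=
  { (MultilinearMap.mkPiAlgebra ℝ (Fin n) (evenAlg M)).compLinearMap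
      (fun i => (q (a i)).comp L) with
    map_eq_zero_of_eq' := by
      intro v i j hv hij
      change ∏ k, q (a k) (L (v k)) = 0
      rw [← Finset.mul_prod_erase _ _ (Finset.mem_univ i),
        ← Finset.mul_prod_erase _ _ (Finset.mem_erase.2 ⟨hij.symm, Finset.mem_univ j⟩),
        ← mul_assoc, hv, q_right, zero_mul] }

lemma altProd_apply {n : ℕ} (a : Fin n → M) (L : (Fin n → ℝ) →ₗ[ℝ] M) (v : Fin n → Fin n → ℝ) :
    altProd a L v = ∏ k, q (a k) (L (v k)) := rfl

lemma main_aux {n : ℕ} (a b : Fin n → M) (K : Matrix (Fin n) (Fin n) ℝ) (I : Finset (Fin n)) :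
    (∑ i, ∑ j, K i j • q (a i) (b j)) ^ (n - I.card) * ∏ i ∈ I, q (a i) (b i) =
      (((n - I.card).factorial : ℝ) *
        (K.submatrix (fun x : ↥(Iᶜ) => (x : Fin n)) fun x : ↥(Iᶜ) => (x : Fin n)).det) •
        ∏ i, q (a i) (b i) := by
  let L : (Fin n → ℝ) →ₗ[ℝ] M := Fintype.linearCombination ℝ b
  have hL1 : ∀ i, L (Pi.single i 1) = b i := by
    intro i; simp [L, Fintype.linearCombination_apply_single]
  have hsum : ∀ i, ∑ j, K i j • q (a i) (b j) = q (a i) (L (K i)) := by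
    intro i; simp [L, Fintype.linearCombination_apply, map_sum]
  have key := comm_main (fun i => q (a i) (L (K i))) (fun i => q (a i) (b i))
    (fun i => q_left _ _ _) (fun i => q_left _ _ _) I
  have hdet := alternating_det (altProd a L)
    (Matrix.of fun i => if i ∈ I then (Pi.single i 1 : Fin n → ℝ) else K i)
  rw [det_aux, altProd_apply, altProd_apply] at hdet
  simp only [hL1] at hdet
  rw [Fintype.card_fin] at key
  simp only [hsum]
  rw [key, mul_smul, ← hdet, Nat.cast_smul_eq_nsmul, nsmul_eq_mul]
  congr 1
  refine Finset.prod_congr rfl fun i _ => ?_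
  change _ = q (a i) (L (if i ∈ I then (Pi.single i 1 : Fin n → ℝ) else K i))
  by_cases hi : i ∈ I
  · rw [if_pos hi, if_pos hi, hL1]
  · rw [if_neg hi, if_neg hi]

end Ext

end GrassmannAux

theorem grassmann_gaussian_power_with_insertions (n : ℕ) (hn : 1 ≤ n)
    (K : Matrix (Fin n) (Fin n) ℝ) (I : Finset (Fin n)) :
    let ψ : Fin n → ExteriorAlgebra ℝ (Fin (2 * n) → ℝ) :=
      fun i => ι ℝ (Pi.single (⟨i.val, by have := i.2; omega⟩ : Fin (2 * n)) (1 : ℝ))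
    let ψbar : Fin n → ExteriorAlgebra ℝ (Fin (2 * n) → ℝ) :=
      fun i => ι ℝ (Pi.single (⟨n + i.val, by have := i.2; omega⟩ : Fin (2 * n)) (1 : ℝ))
    let Q : ExteriorAlgebra ℝ (Fin (2 * n) → ℝ) :=
      ∑ i : Fin n, ∑ j : Fin n, K i j • (ψbar i * ψ j)
    let Ω : ExteriorAlgebra ℝ (Fin (2 * n) → ℝ) :=
      ((List.finRange n).map fun i => ψbar i * ψ i).prod
    -- the product ∧_{i ∈ I} (ψ̄_i ∧ ψ_i), taken in increasing order of i
    let prodI : ExteriorAlgebra ℝ (Fin (2 * n) → ℝ) :=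
      (((List.finRange n).filter fun i => decide (i ∈ I)).map fun i => ψbar i * ψ i).prod
    -- the principal submatrix K_{Iᶜ} on the complement of I
    let KIc : Matrix ↥(Iᶜ) ↥(Iᶜ) ℝ :=
      K.submatrix (fun x : ↥(Iᶜ) => (x : Fin n)) fun x : ↥(Iᶜ) => (x : Fin n)
    Q ^ (n - I.card) * prodI = (((n - I.card).factorial : ℝ) * KIc.det) • Ω := by
  intro ψ ψbar Q Ω prodI KIc
  have h := GrassmannAux.main_aux
    (fun i : Fin n => (Pi.single (⟨n + i.val, by have := i.2; omega⟩ : Fin (2 * n)) (1 : ℝ) :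
      Fin (2 * n) → ℝ))
    (fun i : Fin n => (Pi.single (⟨i.val, by have := i.2; omega⟩ : Fin (2 * n)) (1 : ℝ) :
      Fin (2 * n) → ℝ)) K I
  have hI : I = ((List.finRange n).filter fun i => decide (i ∈ I)).toFinset := by
    ext i; simp
  have h2 := congrArg (GrassmannAux.evenAlg (Fin (2 * n) → ℝ)).val h
  rw [Fin.prod_univ_def] at h2
  conv at h2 =>
    enter [1, 2, 2, 1]
    rw [hI]
  rw [List.prod_toFinset _ ((List.nodup_finRange n).filter _)] at h2
  simp only [map_mul, map_pow, map_sum, map_smul, map_list_prod, List.map_map] at h2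
  exact h2
end

section
/- Let n ≥ 1 and let K be a real n×n matrix. In the exterior algebra Λ(ℝ^{2n}) with ψ_i = ι(e_i), ψ̄_i = ι(e_{n+i}) and Q = Σ_{i,j} K_{ij} ψ̄_i ∧ ψ_j, for any indices i, j ∈ {1,…,n} one has the fermionic Wick pair-correlation identity Q^{n−1} ∧ ψ̄_i ∧ ψ_j = (n−1)! · adj(K)_{j i} · Ω, where adj(K) is the adjugate (transposed cofactor) matrix of K and Ω = ψ̄_1 ∧ ψ_1 ∧ ⋯ ∧ ψ̄_n ∧ ψ_n. -/
open ExteriorAlgebra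

theorem gw_add_pow {C : Type*} [CommRing C] (x R : C) (hx : x * x = 0) (m : ℕ) :
    (x + R) ^ (m + 1) = R ^ (m + 1) + ((m + 1 : ℕ) : C) * x * R ^ m := by
  induction m with
  | zero => simp; ring
  | succ m ih =>
    rw [pow_succ, ih]
    push_cast
    linear_combination ((m : C) + 1) * R ^ m * hx

theorem gw_sum_pow {C κ : Type*} [CommRing C] [DecidableEq κ] (x : κ → C)
    (hx : ∀ a, x a * x a = 0) (s : Finset κ) :
    (∑ a ∈ s, x a) ^ s.card = (s.card.factorial : C) * ∏ a ∈ s, x a := by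
  induction s using Finset.induction_on with
  | empty => simp
  | insert a s ha ih =>
    rw [Finset.sum_insert ha, Finset.prod_insert ha, Finset.card_insert_of_notMem ha,
      gw_add_pow _ _ (hx a), pow_succ, ih, Nat.factorial_succ]
    have h0 : (∏ b ∈ s, x b) * ∑ b ∈ s, x b = 0 := by
      rw [Finset.mul_sum]
      refine Finset.sum_eq_zero fun b hb => ?_
      rw [← Finset.mul_prod_erase s x hb]
      linear_combination (∏ c ∈ s.erase b, x c) * hx b
    push_cast
    linear_combination (s.card.factorial : C) * h0

theorem gw_kill_pow {C : Type*} [CommRing C] (x R y : C) (h : x * y = 0) (m : ℕ) :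
    (x + R) ^ m * y = R ^ m * y := by
  induction m with
  | zero => simp
  | succ m ih =>
    rw [pow_succ, pow_succ]
    linear_combination R * ih + (x + R) ^ m * h

theorem gw_det {C : Type*} [CommRing C] [Algebra ℝ C] (n : ℕ)
    (p : Fin n → (Fin n → ℝ) →ₗ[ℝ] C)
    (h1 : ∀ a b v, p a v * p b v = 0) (M : Matrix (Fin n) (Fin n) ℝ) :
    ∏ a, p a (M a) = M.det • ∏ a, p a (Pi.single a 1) := by
  let f : (Fin n → ℝ) [⋀^Fin n]→ₗ[ℝ] C :=
    { (MultilinearMap.mkPiAlgebra ℝ (Fin n) C).compLinearMap p with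
      map_eq_zero_of_eq' := by
        intro v a b hv hab
        simp only [MultilinearMap.toFun_eq_coe, MultilinearMap.compLinearMap_apply,
          MultilinearMap.mkPiAlgebra_apply]
        rw [← Finset.mul_prod_erase _ _ (Finset.mem_univ a),
          ← Finset.mul_prod_erase _ _ (Finset.mem_erase.2 ⟨hab.symm, Finset.mem_univ b⟩),
          ← mul_assoc, hv, h1, zero_mul] }
  have hf : ∀ v, f v = ∏ a, p a (v a) := fun v => rfl
  let d : (Fin n → ℝ) [⋀^Fin n]→ₗ[ℝ] C :=
    (LinearMap.toSpanSingleton ℝ C (∏ a, p a (Pi.single a 1))).compAlternatingMap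
      Matrix.detRowAlternating
  have hd : ∀ v, d v = Matrix.det v • ∏ a, p a (Pi.single a 1) := fun v => rfl
  have hfd : f = d := by
    refine Module.Basis.ext_alternating (Pi.basisFun ℝ (Fin n)) fun v hv => ?_
    obtain ⟨σ, rfl⟩ : ∃ σ : Equiv.Perm (Fin n), ⇑σ = v :=
      ⟨Equiv.ofBijective v (Finite.injective_iff_bijective.1 hv), rfl⟩
    change f ((Pi.basisFun ℝ (Fin n)) ∘ σ) = d ((Pi.basisFun ℝ (Fin n)) ∘ σ)
    rw [f.map_perm, d.map_perm, hf, hd]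
    have h1 : Matrix.det (fun a => Pi.basisFun ℝ (Fin n) a) = 1 := by
      rw [← Matrix.det_one (R := ℝ) (n := Fin n)]
      congr 1
      ext a b
      simp [Matrix.one_apply, Pi.single_apply, eq_comm]
    rw [h1, one_smul]
    simp
  exact (hf M).symm.trans ((congrArg (fun q => q M) hfd).trans (hd M))

theorem gw_comm {C : Type*} [CommRing C] [Algebra ℝ C] (n : ℕ)
    (p : Fin n → (Fin n → ℝ) →ₗ[ℝ] C)
    (h1 : ∀ a b v, p a v * p b v = 0) (h2 : ∀ a v w, p a v * p a w = 0)
    (K : Matrix (Fin n) (Fin n) ℝ) (i j : Fin n) :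
    (∑ a, p a (K a)) ^ (n - 1) * p i (Pi.single j 1)
      = (((n - 1).factorial : ℝ) * K.adjugate j i) • ∏ a, p a (Pi.single a 1) := by
  rw [← Finset.add_sum_erase _ _ (Finset.mem_univ i), gw_kill_pow _ _ _ (h2 _ _ _)]
  have hc : (Finset.univ.erase i).card = n - 1 := by simp
  have := gw_sum_pow (fun a => p a (K a)) (fun a => h1 _ _ _) (Finset.univ.erase i)
  rw [hc] at this
  rw [this, Matrix.adjugate_apply, mul_smul, ← gw_det n p h1,
    ← Finset.mul_prod_erase _ _ (Finset.mem_univ i), Matrix.updateRow_self]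
  have h3 : ∏ x ∈ Finset.univ.erase i, p x (K.updateRow i (Pi.single j 1) x)
      = ∏ x ∈ Finset.univ.erase i, p x (K x) := by
    refine Finset.prod_congr rfl fun x hx => ?_
    rw [Matrix.updateRow_ne (Finset.ne_of_mem_erase hx)]
  rw [h3, Algebra.smul_def]
  simp only [map_natCast]
  ring

theorem gw_anti {V : Type*} [AddCommGroup V] [Module ℝ V] (u v : V) :
    ι ℝ u * ι ℝ v = - (ι ℝ v * ι ℝ u) :=
  eq_neg_of_add_eq_zero_left (ι_add_mul_swap u v)

theorem gw_pair_comm {V : Type*} [AddCommGroup V] [Module ℝ V] (u v w : V) :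
    ι ℝ u * ι ℝ v * ι ℝ w = ι ℝ w * (ι ℝ u * ι ℝ v) := by
  rw [mul_assoc, gw_anti v w, mul_neg, ← mul_assoc, gw_anti u w, neg_mul, neg_neg, mul_assoc]

theorem gw_pairs {V : Type*} [AddCommGroup V] [Module ℝ V] (u v w z : V) :
    (ι ℝ u * ι ℝ v) * (ι ℝ w * ι ℝ z) = (ι ℝ w * ι ℝ z) * (ι ℝ u * ι ℝ v) := by
  rw [← mul_assoc, gw_pair_comm, mul_assoc, gw_pair_comm, ← mul_assoc]

theorem gw_ext {V : Type*} [AddCommGroup V] [Module ℝ V] (n : ℕ) (u : Fin n → V)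
    (g : (Fin n → ℝ) →ₗ[ℝ] V) (K : Matrix (Fin n) (Fin n) ℝ) (i j : Fin n) :
    (∑ a, ι ℝ (u a) * ι ℝ (g (K a))) ^ (n - 1) * (ι ℝ (u i) * ι ℝ (g (Pi.single j 1)))
      = (((n - 1).factorial : ℝ) * K.adjugate j i) •
        ((List.finRange n).map fun a => ι ℝ (u a) * ι ℝ (g (Pi.single a 1))).prod := by
  let s : Set (ExteriorAlgebra ℝ V) := {x | ∃ a b, x = ι ℝ a * ι ℝ b}
  have hs : ∀ x ∈ s, ∀ y ∈ s, x * y = y * x := by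
    rintro _ ⟨a, b, rfl⟩ _ ⟨c, d, rfl⟩
    exact gw_pairs a b c d
  let _ : CommRing (Algebra.adjoin ℝ s) := Algebra.adjoinCommRingOfComm ℝ hs
  let F : Algebra.adjoin ℝ s →ₐ[ℝ] ExteriorAlgebra ℝ V := (Algebra.adjoin ℝ s).val
  have hF : Function.Injective F := Subtype.val_injective
  let p : Fin n → (Fin n → ℝ) →ₗ[ℝ] Algebra.adjoin ℝ s := fun a =>
    LinearMap.codRestrict (Subalgebra.toSubmodule (Algebra.adjoin ℝ s))
      ((LinearMap.mulLeft ℝ (ι ℝ (u a))).comp ((ι ℝ).comp g))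
      (fun v => Algebra.subset_adjoin ⟨u a, g v, rfl⟩)
  have hp : ∀ a v, F (p a v) = ι ℝ (u a) * ι ℝ (g v) := fun a v => rfl
  have key := gw_comm n p
    (by
      intro a b v
      apply hF
      rw [map_mul, hp, hp, map_zero, ← mul_assoc, gw_pair_comm, mul_assoc, mul_assoc,
        ι_sq_zero, mul_zero, mul_zero])
    (by
      intro a v w
      apply hF
      rw [map_mul, hp, hp, map_zero, ← mul_assoc, gw_pair_comm, ← mul_assoc,
        ι_sq_zero, zero_mul, zero_mul]) K i j
  have key2 := congrArg F key
  rw [map_mul, map_pow, map_sum, map_smul, ← List.prod_ofFn, map_list_prod, List.map_ofFn,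
    List.ofFn_eq_map] at key2
  exact key2

theorem grassmann_wick_pair_correlation (n : ℕ) (hn : 1 ≤ n)
    (K : Matrix (Fin n) (Fin n) ℝ) (i j : Fin n) :
    let ψ : Fin n → ExteriorAlgebra ℝ (Fin (2 * n) → ℝ) :=
      fun a => ι ℝ (Pi.single (⟨a.val, by have := a.2; omega⟩ : Fin (2 * n)) (1 : ℝ))
    let ψbar : Fin n → ExteriorAlgebra ℝ (Fin (2 * n) → ℝ) :=
      fun a => ι ℝ (Pi.single (⟨n + a.val, by have := a.2; omega⟩ : Fin (2 * n)) (1 : ℝ))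
    let Q : ExteriorAlgebra ℝ (Fin (2 * n) → ℝ) :=
      ∑ a : Fin n, ∑ b : Fin n, K a b • (ψbar a * ψ b)
    let Ω : ExteriorAlgebra ℝ (Fin (2 * n) → ℝ) :=
      ((List.finRange n).map fun a => ψbar a * ψ a).prod
    Q ^ (n - 1) * ψbar i * ψ j
      = (((n - 1).factorial : ℝ) * K.adjugate j i) • Ω := by
  intro ψ ψbar Q Ω
  let g : (Fin n → ℝ) →ₗ[ℝ] (Fin (2 * n) → ℝ) :=
    Fintype.linearCombination ℝ (fun a : Fin n =>
      (Pi.single (⟨a.val, by have := a.2; omega⟩ : Fin (2 * n)) (1 : ℝ) : Fin (2 * n) → ℝ))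
  have hg : ∀ a, ι ℝ (g (Pi.single a 1)) = ψ a := by
    intro a
    simp [g, ψ, Fintype.linearCombination_apply_single]
  have hgv : ∀ v, ι ℝ (g v) = ∑ b, v b • ψ b := by
    intro v
    simp [g, ψ, Fintype.linearCombination_apply]
  have key := gw_ext n (fun a : Fin n =>
      (Pi.single (⟨n + a.val, by have := a.2; omega⟩ : Fin (2 * n)) (1 : ℝ) : Fin (2 * n) → ℝ))
      g K i j
  simp only [hg] at key
  have hQ : Q = ∑ a, ψbar a * ι ℝ (g (K a)) := by
    simp only [Q, hgv, Finset.mul_sum, mul_smul_comm]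
  rw [hQ, mul_assoc]
  exact key
end

section
/- Let n ≥ 1, let K be a real n×n matrix, and let I ⊆ {1,…,n} with m = |I|. In the exterior algebra Λ(ℝ^{2n+2}) with ψ_i = ι(e_i), ψ̄_i = ι(e_{n+i}), α = ι(e_{2n+1}), β = ι(e_{2n+2}) and S = Σ_{i,j} K_{ij} ψ̄_i ∧ ψ_j − Σ_i α ∧ ψ_i − Σ_i ψ̄_i ∧ β, one has S^{n−m+1} ∧ (∧_{i∈I} (ψ̄_i ∧ ψ_i)) = −(n−m+1)! · |adj(K_{Iᶜ})| · Ω ∧ α ∧ β, where K_{Iᶜ} is the principal submatrix of K with rows and columns in the complement of I, |adj(K_{Iᶜ})| is the sum of all entries of its adjugate, and Ω = ψ̄_1 ∧ ψ_1 ∧ ⋯ ∧ ψ̄_n ∧ ψ_n. -/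
open ExteriorAlgebra

/-- Powers of a sum of commuting square-zero elements. -/
theorem gg_sum_pow {R T : Type*} [CommRing R] [DecidableEq T] (x : T → R)
    (hx : ∀ a, x a * x a = 0) (s : Finset T) :
    (∑ a ∈ s, x a) ^ s.card = (s.card.factorial : R) * ∏ a ∈ s, x a ∧
      (∑ a ∈ s, x a) ^ (s.card + 1) = 0 := by
  induction s using Finset.induction_on with
  | empty => simp
  | insert a s ha ih =>
    obtain ⟨ih1, ih2⟩ := ih
    rw [Finset.sum_insert ha, Finset.prod_insert ha, Finset.card_insert_of_notMem ha]
    have key : ∀ (k : ℕ) (t : R), (x a + t) ^ (k + 1) = t ^ (k + 1) + (k + 1 : ℕ) * t ^ k * x a := by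
      intro k t
      induction k with
      | zero => simp; ring
      | succ k ih =>
        rw [pow_succ, ih]
        push_cast
        linear_combination (k + 1) * t ^ k * hx a
    constructor
    · rw [key, ih2, mul_assoc, mul_comm (_ ^ _), ih1, Nat.factorial_succ]
      push_cast
      ring
    · rw [key, pow_succ _ (s.card + 1), ih2]; simp

theorem gg_perm {R T : Type*} [CommRing R] [Fintype T] [DecidableEq T] (y : T → T → R)
    (h2 : ∀ a b c d, y a b * y c d = - (y a d * y c b)) (σ : Equiv.Perm T) :
    ∏ a, y a (σ a) = ((Equiv.Perm.sign σ : ℤ) : R) * ∏ a, y a a := by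
  induction σ using Equiv.Perm.swap_induction_on' with
  | one => simp
  | mul_swap f x z hxz ih =>
    have hz : z ∈ Finset.univ.erase x := by simp [hxz.symm]
    have e1 : ∀ g : T → R, ∏ a, g a = g x * g z * ∏ a ∈ (Finset.univ.erase x).erase z, g a := by
      intro g
      rw [← Finset.mul_prod_erase _ _ (Finset.mem_univ x), ← Finset.mul_prod_erase _ _ hz, mul_assoc]
    have e2 : ∏ a ∈ (Finset.univ.erase x).erase z, y a ((f * Equiv.swap x z) a) =
        ∏ a ∈ (Finset.univ.erase x).erase z, y a (f a) := by
      refine Finset.prod_congr rfl fun a ha => ?_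
      simp only [Finset.mem_erase, Finset.mem_univ, and_true] at ha
      simp [Equiv.swap_apply_of_ne_of_ne ha.2 ha.1]
    have e3 : ∏ a, y a ((f * Equiv.swap x z) a) = - ∏ a, y a (f a) := by
      rw [e1, e2, e1 (fun a => y a (f a))]
      simp only [Equiv.Perm.mul_apply, Equiv.swap_apply_left, Equiv.swap_apply_right]
      rw [h2]; ring
    rw [e3, ih, Equiv.Perm.sign_mul, Equiv.Perm.sign_swap hxz]
    simp

theorem gg_det {R T : Type*} [CommRing R] [Algebra ℝ R] [Fintype T] [DecidableEq T]
    (y : T → T → R) (M : Matrix T T ℝ)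
    (h2 : ∀ a b c d, y a b * y c d = - (y a d * y c b))
    (h3 : ∀ a b c, y a b * y c b = 0) :
    ∏ a, ∑ b, M a b • y a b = M.det • ∏ a, y a a := by
  rw [Finset.prod_univ_sum, Fintype.piFinset_univ, ← Matrix.det_transpose, Matrix.det_apply',
    Finset.sum_smul]
  symm
  refine Fintype.sum_of_injective (fun σ : Equiv.Perm T => (σ : T → T)) DFunLike.coe_injective _ _
    ?_ ?_
  · intro f hf
    have hni : ¬ Function.Injective f := fun hi =>
      hf ⟨Equiv.ofBijective f (Finite.injective_iff_bijective.1 hi), rfl⟩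
    simp only [Function.Injective, not_forall] at hni
    obtain ⟨x, z, hfx, hxz⟩ := hni
    have hz : z ∈ Finset.univ.erase x := by simp [Ne.symm hxz]
    rw [← Finset.mul_prod_erase _ _ (Finset.mem_univ x), ← Finset.mul_prod_erase _ _ hz, ← mul_assoc,
      hfx, smul_mul_smul_comm, h3]
    simp
  · intro σ
    simp only [Matrix.transpose_apply, Algebra.smul_def, map_mul, map_intCast, map_prod,
      Finset.prod_mul_distrib, gg_perm y h2]
    ring

theorem gg_main {R T J : Type*} [CommRing R] [Algebra ℝ R] [Fintype T] [DecidableEq T]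
    [Fintype J] [DecidableEq J]
    (y : T → T → R) (M : Matrix T T ℝ)
    (h1 : ∀ a b d, y a b * y a d = 0)
    (h2 : ∀ a b c d, y a b * y c d = - (y a d * y c b))
    (h3 : ∀ a b c, y a b * y c b = 0) (I : Finset T) (e : J → T) (he : Function.Injective e)
    (hI : ∀ a, a ∉ Set.range e → a ∈ I) :
    (∑ a, ∑ b, M a b • y a b) ^ (Fintype.card J) * ∏ i ∈ I, y i i =
      ((Fintype.card J).factorial * (M.submatrix e e).det) •
        ((∏ j, y (e j) (e j)) * ∏ i ∈ I, y i i) := by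
  set P := ∏ i ∈ I, y i i with hP
  have hr : ∀ a ∈ I, ∀ b, P * y a b = 0 := by
    intro a ha b
    rw [hP, ← Finset.mul_prod_erase _ _ ha]
    linear_combination (∏ i ∈ I.erase a, y i i) * h1 a a b
  have hc : ∀ b ∈ I, ∀ a, P * y a b = 0 := by
    intro a ha b
    rw [hP, ← Finset.mul_prod_erase _ _ ha]
    linear_combination (∏ i ∈ I.erase a, y i i) * h3 a a b
  set S' := ∑ c, ∑ d, (M.submatrix e e) c d • y (e c) (e d) with hS'
  have hS : P * (∑ a, ∑ b, M a b • y a b) = P * S' := by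
    simp only [hS', Finset.mul_sum]
    symm
    refine Fintype.sum_of_injective e he _ _ ?_ ?_
    · intro a ha
      refine Finset.sum_eq_zero fun b _ => ?_
      rw [mul_smul_comm, hr a (hI a ha), smul_zero]
    · intro c
      refine Fintype.sum_of_injective e he _ _ ?_ ?_
      · intro a ha
        rw [mul_smul_comm, hc a (hI a ha), smul_zero]
      · intro d; rfl
  have hpow : ∀ k : ℕ, (∑ a, ∑ b, M a b • y a b) ^ k * P = S' ^ k * P := by
    intro k
    induction k with
    | zero => simp
    | succ k ih =>
      rw [pow_succ, pow_succ]
      linear_combination (∑ a, ∑ b, M a b • y a b) ^ k * hS + S' * ih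
  have hsq := (gg_sum_pow (fun c : J => ∑ d, (M.submatrix e e) c d • y (e c) (e d)) (by
    intro c
    rw [Finset.sum_mul_sum]
    refine Finset.sum_eq_zero fun i _ => Finset.sum_eq_zero fun j _ => ?_
    rw [smul_mul_smul_comm, h1, smul_zero]) Finset.univ).1
  rw [hpow, hS', ← Finset.card_univ, hsq,
    gg_det (fun c d => y (e c) (e d)) (M.submatrix e e) (fun _ _ _ _ => h2 _ _ _ _)
    (fun _ _ _ => h3 _ _ _)]
  simp only [Algebra.smul_def, map_mul, map_natCast]
  ring

theorem gg_bord_aux {R m : Type*} [CommRing R] [Fintype m] [DecidableEq m] (A : Matrix m m R)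
    (u : Matrix m Unit R) (v : Matrix Unit m R) :
    (Matrix.fromBlocks A u v 0).det * A.det = - (A.det * (v * A.adjugate * u) () ()) := by
  have h : Matrix.fromBlocks A u v 0 *
      Matrix.fromBlocks (1 : Matrix m m R) (-(A.adjugate * u)) 0 (A.det • (1 : Matrix Unit Unit R)) =
      Matrix.fromBlocks A 0 v (-(v * A.adjugate * u)) := by
    rw [Matrix.fromBlocks_multiply]
    congr 1
    · simp
    · rw [Matrix.mul_neg, ← Matrix.mul_assoc, Matrix.mul_adjugate]; simp
    · simp
    · simp [Matrix.mul_assoc]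
  have h' := congrArg Matrix.det h
  rw [Matrix.det_mul, Matrix.det_fromBlocks_zero₂₁, Matrix.det_fromBlocks_zero₁₂] at h'
  simpa using h'

theorem gg_bord {m : Type*} [Fintype m] [DecidableEq m] (A : Matrix m m ℝ) :
    (Matrix.fromBlocks A (Matrix.of fun _ _ => -1) (Matrix.of fun _ _ => -1) 0 : Matrix (m ⊕ Unit) (m ⊕ Unit) ℝ).det
      = - ∑ a, ∑ b, A.adjugate a b := by
  let B : Matrix m m (Polynomial ℝ) := (-A).charmatrix
  have hB : B.det ≠ 0 := (Matrix.charpoly_monic (-A)).ne_zero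
  have h := gg_bord_aux B (Matrix.of fun _ _ => -1) (Matrix.of fun _ _ => -1)
  rw [mul_comm, ← mul_neg] at h
  have h' := mul_left_cancel₀ hB h
  have h'' := congrArg (Polynomial.evalRingHom (0 : ℝ)) h'
  have hBA : (Polynomial.evalRingHom (0 : ℝ)).mapMatrix B = A := by
    ext i j
    by_cases hij : i = j
    · subst hij; simp [B, Matrix.charmatrix_apply]
    · simp [B, Matrix.charmatrix_apply, hij]
  rw [RingHom.map_det, map_neg] at h''
  convert h'' using 1
  · congr 1
    ext (i | i) (j | j)
    · simpa using (congrFun (congrFun hBA i) j).symm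
    · simp
    · simp
    · simp
  · rw [← hBA, ← RingHom.map_adjugate]
    simp only [Matrix.mul_apply, map_sum, map_mul, RingHom.mapMatrix_apply, Matrix.map_apply]
    rw [Finset.sum_comm]
    simp

theorem gg_comm {A T : Type} [Ring A] [Algebra ℝ A] (y : T → T → A)
    (hc : ∀ a b c d, y a b * y c d = y c d * y a b) :
    ∃ (R : Type) (_ : CommRing R) (_ : Algebra ℝ R) (φ : R →ₐ[ℝ] A) (Y : T → T → R),
      Function.Injective φ ∧ ∀ a b, φ (Y a b) = y a b := by
  let s : Set A := {z | ∃ a b, y a b = z}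
  have hs : ∀ a ∈ s, ∀ b ∈ s, a * b = b * a := by
    rintro _ ⟨a, b, rfl⟩ _ ⟨c, d, rfl⟩
    exact hc a b c d
  letI := Algebra.adjoinCommRingOfComm ℝ hs
  exact ⟨Algebra.adjoin ℝ s, this, (Algebra.adjoin ℝ s).algebra, (Algebra.adjoin ℝ s).val,
    fun a b => ⟨y a b, Algebra.subset_adjoin ⟨a, b, rfl⟩⟩, Subtype.val_injective, fun _ _ => rfl⟩

theorem grassmann_gaussian_with_sources_and_insertions (n : ℕ) (hn : 1 ≤ n)
    (K : Matrix (Fin n) (Fin n) ℝ) (I : Finset (Fin n)) :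
    let ψ : Fin n → ExteriorAlgebra ℝ (Fin (2 * n + 2) → ℝ) :=
      fun i => ι ℝ (Pi.single (⟨i.val, by have := i.2; omega⟩ : Fin (2 * n + 2)) (1 : ℝ))
    let ψbar : Fin n → ExteriorAlgebra ℝ (Fin (2 * n + 2) → ℝ) :=
      fun i => ι ℝ (Pi.single (⟨n + i.val, by have := i.2; omega⟩ : Fin (2 * n + 2)) (1 : ℝ))
    let α : ExteriorAlgebra ℝ (Fin (2 * n + 2) → ℝ) :=
      ι ℝ (Pi.single (⟨2 * n, by omega⟩ : Fin (2 * n + 2)) (1 : ℝ))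
    let β : ExteriorAlgebra ℝ (Fin (2 * n + 2) → ℝ) :=
      ι ℝ (Pi.single (⟨2 * n + 1, by omega⟩ : Fin (2 * n + 2)) (1 : ℝ))
    let S : ExteriorAlgebra ℝ (Fin (2 * n + 2) → ℝ) :=
      (∑ i : Fin n, ∑ j : Fin n, K i j • (ψbar i * ψ j))
        - (∑ i : Fin n, α * ψ i) - ∑ i : Fin n, ψbar i * β
    let Ω : ExteriorAlgebra ℝ (Fin (2 * n + 2) → ℝ) :=
      ((List.finRange n).map fun i => ψbar i * ψ i).prod
    -- the product ∧_{i ∈ I} (ψ̄_i ∧ ψ_i), taken in increasing order of i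
    let prodI : ExteriorAlgebra ℝ (Fin (2 * n + 2) → ℝ) :=
      (((List.finRange n).filter fun i => decide (i ∈ I)).map fun i => ψbar i * ψ i).prod
    -- the principal submatrix K_{Iᶜ} on the complement of I
    let KIc : Matrix ↥(Iᶜ) ↥(Iᶜ) ℝ :=
      K.submatrix (fun x : ↥(Iᶜ) => (x : Fin n)) fun x : ↥(Iᶜ) => (x : Fin n)
    S ^ (n - I.card + 1) * prodI
      = -((((n - I.card + 1).factorial : ℝ) * ∑ a, ∑ b, KIc.adjugate a b)
          • (Ω * α * β)) := by
  intro ψ ψbar α β S Ω prodI KIc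
  -- all generators are of the form `ι v`
  obtain ⟨u, hu⟩ : ∃ u : Fin n ⊕ Unit → (Fin (2 * n + 2) → ℝ),
      ∀ a, ι ℝ (u a) = Sum.elim ψbar (fun _ => α) a :=
    ⟨Sum.elim (fun i => _) (fun _ => _), by rintro (i | i) <;> rfl⟩
  obtain ⟨w, hw⟩ : ∃ w : Fin n ⊕ Unit → (Fin (2 * n + 2) → ℝ),
      ∀ a, ι ℝ (w a) = Sum.elim ψ (fun _ => β) a :=
    ⟨Sum.elim (fun i => _) (fun _ => _), by rintro (i | i) <;> rfl⟩
  have anti : ∀ x z : Fin (2 * n + 2) → ℝ, ι ℝ x * ι ℝ z = -(ι ℝ z * ι ℝ x) := fun x z =>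
    eq_neg_of_add_eq_zero_left (ι_add_mul_swap x z)
  have sq : ∀ x : Fin (2 * n + 2) → ℝ, ι ℝ x * ι ℝ x = 0 := fun x => ι_sq_zero x
  have swap4 : ∀ p q r t : Fin (2 * n + 2) → ℝ, (ι ℝ p * ι ℝ q) * (ι ℝ r * ι ℝ t) =
      - ((ι ℝ p * ι ℝ t) * (ι ℝ r * ι ℝ q)) := by
    intro p q r t
    calc (ι ℝ p * ι ℝ q) * (ι ℝ r * ι ℝ t) = ι ℝ p * (ι ℝ q * ι ℝ r) * ι ℝ t := by
          simp only [mul_assoc]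
      _ = - (ι ℝ p * ι ℝ r * (ι ℝ q * ι ℝ t)) := by
          rw [anti q r]; simp only [mul_assoc, mul_neg, neg_mul]
      _ = ι ℝ p * (ι ℝ r * ι ℝ t) * ι ℝ q := by
          rw [anti q t]; simp only [mul_assoc, mul_neg, neg_neg]
      _ = _ := by
          rw [anti r t]; simp only [mul_assoc, mul_neg, neg_mul]
  have swap4' : ∀ p q r t : Fin (2 * n + 2) → ℝ, (ι ℝ p * ι ℝ q) * (ι ℝ r * ι ℝ t) =
      - ((ι ℝ r * ι ℝ q) * (ι ℝ p * ι ℝ t)) := by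
    intro p q r t
    rw [anti p q, anti r t, neg_mul_neg, swap4, anti q r, anti t p, neg_mul_neg]
  let y : Fin n ⊕ Unit → Fin n ⊕ Unit → ExteriorAlgebra ℝ (Fin (2 * n + 2) → ℝ) :=
    fun a b => ι ℝ (u a) * ι ℝ (w b)
  have k2 : ∀ a b c d, y a b * y c d = - (y a d * y c b) := fun a b c d => swap4 _ _ _ _
  have k2' : ∀ a b c d, y a b * y c d = - (y c b * y a d) := fun a b c d => swap4' _ _ _ _
  have kc : ∀ a b c d, y a b * y c d = y c d * y a b := fun a b c d => by
    rw [k2, k2', neg_neg]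
  have k3 : ∀ a b c, y a b * y c b = 0 := fun a b c => by
    simp only [y]
    rw [mul_assoc, ← mul_assoc (ι ℝ (w b)), anti (w b) (u c), neg_mul, mul_assoc, sq]; simp
  have k1 : ∀ a b d, y a b * y a d = 0 := fun a b d => by
    simp only [y]
    rw [mul_assoc, ← mul_assoc (ι ℝ (w b)), anti (w b) (u a), ← mul_assoc, mul_neg, ← mul_assoc, sq]
    simp
  obtain ⟨R, _, _, φ, Y, hφ, hY⟩ := gg_comm y kc
  have H := gg_main Y
    (Matrix.fromBlocks K (Matrix.of fun _ _ => -1) (Matrix.of fun _ _ => -1) 0 : Matrix (Fin n ⊕ Unit) (Fin n ⊕ Unit) ℝ)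
    (fun a b d => hφ (by simp [hY, k1]))
    (fun a b c d => hφ (by simp only [map_mul, map_neg, hY]; exact k2 a b c d))
    (fun a b c => hφ (by simp [hY, k3]))
    (I.map Function.Embedding.inl) (Sum.map (fun x : ↥(Iᶜ) => (x : Fin n)) (id : Unit → Unit))
    (Sum.map_injective.2 ⟨Subtype.val_injective, Function.injective_id⟩)
    (by
      rintro (a | a) ha
      · by_contra hh
        refine ha ⟨Sum.inl ⟨a, ?_⟩, rfl⟩
        simpa using hh
      · exact absurd ⟨Sum.inr a, rfl⟩ ha)
  have hcard : Fintype.card (↥(Iᶜ) ⊕ Unit) = n - I.card + 1 := by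
    rw [Fintype.card_sum, Fintype.card_coe, Finset.card_compl]; simp
  have hsub : (Matrix.fromBlocks K (Matrix.of fun _ _ => -1) (Matrix.of fun _ _ => -1) 0 :
      Matrix (Fin n ⊕ Unit) (Fin n ⊕ Unit) ℝ).submatrix
      (Sum.map (fun x : ↥(Iᶜ) => (x : Fin n)) (id : Unit → Unit))
      (Sum.map (fun x : ↥(Iᶜ) => (x : Fin n)) (id : Unit → Unit)) =
      Matrix.fromBlocks KIc (Matrix.of fun _ _ => -1) (Matrix.of fun _ _ => -1) 0 := by
    ext (i | i) (j | j) <;> rfl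
  rw [hsub, gg_bord, hcard] at H
  have H' := congrArg φ H
  have hSφ : φ (∑ a, ∑ b, (Matrix.fromBlocks K (Matrix.of fun _ _ => -1) (Matrix.of fun _ _ => -1) 0 :
      Matrix (Fin n ⊕ Unit) (Fin n ⊕ Unit) ℝ) a b • Y a b) = S := by
    simp only [map_sum, map_smul, hY, y, hu, hw, Fintype.sum_sum_type, S, Matrix.fromBlocks_apply₁₁,
      Matrix.fromBlocks_apply₁₂, Matrix.fromBlocks_apply₂₁, Matrix.fromBlocks_apply₂₂]
    simp [Finset.sum_add_distrib, hY, y, hu, hw]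
    abel
  have hIφ : φ (∏ i ∈ I.map Function.Embedding.inl, Y i i) = prodI := by
    rw [Finset.prod_map]
    have : (((List.finRange n).filter fun i => decide (i ∈ I)).map
        fun i => Y (Sum.inl i) (Sum.inl i)).prod = ∏ i ∈ I, Y (Sum.inl i) (Sum.inl i) := by
      rw [← List.prod_toFinset _ ((List.nodup_finRange n).filter _)]
      congr 1
      ext i; simp
    simp only [Function.Embedding.inl_apply]
    rw [← this, map_list_prod, List.map_map]
    simp only [prodI]
    congr 2
    funext i
    simp [hY, y, hu, hw]
  have hΩφ : φ ((∏ j : ↥(Iᶜ) ⊕ Unit, Y (Sum.map (fun x : ↥(Iᶜ) => (x : Fin n)) (id : Unit → Unit) j)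
      (Sum.map (fun x : ↥(Iᶜ) => (x : Fin n)) (id : Unit → Unit) j)) *
      ∏ i ∈ I.map Function.Embedding.inl, Y i i) = Ω * α * β := by
    have h1 : (∏ j : ↥(Iᶜ) ⊕ Unit, Y (Sum.map (fun x : ↥(Iᶜ) => (x : Fin n)) (id : Unit → Unit) j)
      (Sum.map (fun x : ↥(Iᶜ) => (x : Fin n)) (id : Unit → Unit) j)) *
      ∏ i ∈ I.map Function.Embedding.inl, Y i i =
      (∏ i, Y (Sum.inl i) (Sum.inl i)) * Y (Sum.inr ()) (Sum.inr ()) := by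
      rw [Fintype.prod_sum_type, Finset.prod_map, ← Finset.prod_mul_prod_compl I]
      simp only [Sum.map_inl, Sum.map_inr, Function.Embedding.inl_apply]
      rw [Finset.prod_coe_sort (Iᶜ) (fun i => Y (Sum.inl i) (Sum.inl i))]
      simp
      ring
    have h2 : ((List.finRange n).map fun i => Y (Sum.inl i) (Sum.inl i)).prod =
        ∏ i, Y (Sum.inl i) (Sum.inl i) := by
      rw [← List.prod_toFinset _ (List.nodup_finRange n)]
      congr 1
      ext i; simp
    rw [h1, ← h2, map_mul, map_list_prod, List.map_map, mul_assoc, hY]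
    simp only [Ω, y, hu, hw, Sum.elim_inr]
    congr 3
    funext i
    simp [hY, y, hu, hw]
  rw [map_mul, map_pow, map_smul, hSφ, hIφ, hΩφ] at H'
  rw [H', mul_neg, neg_smul]
end
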